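/- arXiv:1511.09189 — 2 statements merged into one kernel-verified Lean document; each statement's English description precedes it below -/
import Mathlib

section
/- Let H₁ and H₂ be finite-dimensional complex Hilbert spaces, H = H₁ ⊗ H₂, and d₂ = dim H₂. Let f : (0,∞) → ℝ be a matrix entropy. Then the function G(ρ) = d₂⁻¹ · Tr₁₂ f(d₂ρ) − Tr₁ f(ρ₁) is convex on the set of positive definite operators ρ acting on H, where ρ₁ = Tr₂ ρ is the partial trace of ρ over H₂. That is, for all positive definite ρ, σ on H and all t ∈ [0,1], G(tρ + (1−t)σ) ≤ t·G(ρ) + (1−t)·G(σ). -/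
open Matrix
open scoped ComplexOrder

attribute [local instance] Matrix.normedAddCommGroup Matrix.normedSpace

/-- The matrix function induced by `f : ℝ → ℝ` via the functional calculus
(defined to be `0` on non-Hermitian matrices). -/
noncomputable def matFun {m : Type*} [Fintype m] [DecidableEq m] (f : ℝ → ℝ)
    (x : Matrix m m ℂ) : Matrix m m ℂ :=
  if hx : x.IsHermitian then
    (hx.eigenvectorUnitary : Matrix m m ℂ) *
      Matrix.diagonal (fun i => (f (hx.eigenvalues i) : ℂ)) *
      star (hx.eigenvectorUnitary : Matrix m m ℂ)
  else 0

/-- `D` is the (complex-linear extension of the) Fréchet differential at `x` of the matrix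
function induced by `f`, the differential being taken within the real subspace of
Hermitian matrices. -/
noncomputable def IsFDerivMatFun {m : Type*} [Fintype m] [DecidableEq m] (f : ℝ → ℝ)
    (x : Matrix m m ℂ) (D : Matrix m m ℂ →L[ℂ] Matrix m m ℂ) : Prop :=
  HasFDerivWithinAt (matFun f) (D.restrictScalars ℝ) {y : Matrix m m ℂ | y.IsHermitian} x

/-- `f : (0,∞) → ℝ` (given together with its derivative `f'`) is a matrix entropy:
it is twice continuously differentiable and for every `n` the map
`(x, h) ↦ Tr (h* ⬝ (Df' x) h)` is jointly convex in pairs `(x, h)` of an `n × n`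
positive definite matrix `x` and an arbitrary `n × n` matrix `h`. -/
noncomputable def IsMatrixEntropy (f f' : ℝ → ℝ) : Prop :=
  ContDiffOn ℝ 2 f (Set.Ioi 0) ∧
  (∀ t ∈ Set.Ioi (0 : ℝ), HasDerivAt f (f' t) t) ∧
  ∀ (n : ℕ)
    (D : Matrix (Fin n) (Fin n) ℂ → (Matrix (Fin n) (Fin n) ℂ →L[ℂ] Matrix (Fin n) (Fin n) ℂ)),
    (∀ x : Matrix (Fin n) (Fin n) ℂ, x.PosDef → IsFDerivMatFun f' x (D x)) →
    ConvexOn ℝ {q : Matrix (Fin n) (Fin n) ℂ × Matrix (Fin n) (Fin n) ℂ | q.1.PosDef}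
      (fun q => (Matrix.trace (q.2ᴴ * (D q.1) q.2)).re)

/-- The partial trace over the second tensor factor. -/
noncomputable def ptrace {ι₁ ι₂ : Type*} [Fintype ι₂]
    (ρ : Matrix (ι₁ × ι₂) (ι₁ × ι₂) ℂ) : Matrix ι₁ ι₁ ℂ :=
  Matrix.of fun i j => ∑ k : ι₂, ρ (i, k) (j, k)

/-!
The second derivative of `ρ ↦ Tr f(ρ)` in a Hermitian direction `h` is the form
`Tr (h · Df'(ρ) h)`, which is jointly convex in `(ρ, h)` because `f` is a matrix entropy. It is
invariant under unitary conjugation and is multiplied by `d₂` under `x ↦ x ⊗ 1`. Now `ρ₁ ⊗ 1` is an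
average of conjugates of `d₂ρ` by unitaries of the second factor, so Jensen's inequality bounds `d₂`
times the form at `(ρ₁, h₁)` by the form at `(d₂ρ, d₂h)`: this says that the second derivatives of
`G` are nonnegative.

The differential `Df'` is obtained from spectral projections `Pᵣ` of `x`: summing the identities
`Pᵣ (g(y) - g(x)) = Pᵣ (y - x) g[r, y]`, with `g[r, ·]` a divided difference, expresses
`g(y) - g(x)` exactly, and continuity of `y ↦ g[r, y]` gives the derivative.
-/

section FiniteSpectrum

variable {A : Type*} [Ring A] [StarRing A] [TopologicalSpace A] [Algebra ℝ A]
  [ContinuousFunctionalCalculus ℝ A IsSelfAdjoint] {x y : A}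

theorem cfc_single_mul_cfc (g : ℝ → ℝ) (hfin : (spectrum ℝ x).Finite) (r : ℝ) :
    cfc (Pi.single r 1 : ℝ → ℝ) x * cfc g x = g r • cfc (Pi.single r 1 : ℝ → ℝ) x := by
  rw [← cfc_mul _ _ x (hfin.continuousOn _) (hfin.continuousOn _),
    ← cfc_const_mul _ _ x (hfin.continuousOn _)]
  congr 1
  ext s
  obtain rfl | hs := eq_or_ne s r
  · simp
  · simp [hs]

theorem cfc_eq_sum_smul_cfc_single (g : ℝ → ℝ) (hfin : (spectrum ℝ x).Finite) :
    cfc g x = ∑ r ∈ hfin.toFinset, g r • cfc (Pi.single r 1 : ℝ → ℝ) x := by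
  have hg : (spectrum ℝ x).EqOn g (∑ r ∈ hfin.toFinset, fun s ↦ g r * (Pi.single r 1 : ℝ → ℝ) s) :=
    fun s hs ↦ by simp [Pi.single_apply, hs]
  rw [cfc_congr hg, cfc_sum _ _ _ fun _ _ ↦ hfin.continuousOn _]
  exact Finset.sum_congr rfl fun r _ ↦ cfc_const_mul _ _ _ (hfin.continuousOn _)

theorem sub_algebraMap_mul_cfc_dslope {g : ℝ → ℝ} {r : ℝ} (hy : IsSelfAdjoint y)
    (hg : ContinuousOn g (spectrum ℝ y)) (hd : ContinuousOn (dslope g r) (spectrum ℝ y)) :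
    (y - algebraMap ℝ A r) * cfc (dslope g r) y = cfc g y - algebraMap ℝ A (g r) := by
  calc (y - algebraMap ℝ A r) * cfc (dslope g r) y
      = cfc (fun s ↦ s - r) y * cfc (dslope g r) y := by
        rw [cfc_sub (fun s ↦ s) (fun _ ↦ r) y, cfc_id' ℝ y, cfc_const r y]
    _ = cfc (fun s ↦ g s - g r) y := by
        rw [← cfc_mul _ _ y]
        exact congrArg (cfc · y) (funext (sub_smul_dslope g r))
    _ = cfc g y - algebraMap ℝ A (g r) := by
        rw [cfc_sub g (fun _ ↦ g r) y, cfc_const (g r) y]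

theorem cfc_sub_cfc_eq_sum {g : ℝ → ℝ} (hx : IsSelfAdjoint x) (hfin : (spectrum ℝ x).Finite)
    (hy : IsSelfAdjoint y) (hg : ContinuousOn g (spectrum ℝ y))
    (hd : ∀ r ∈ spectrum ℝ x, ContinuousOn (dslope g r) (spectrum ℝ y)) :
    cfc g y - cfc g x = ∑ r ∈ hfin.toFinset,
      cfc (Pi.single r 1 : ℝ → ℝ) x * (y - x) * cfc (dslope g r) y := by
  have hone : (1 : A) = ∑ r ∈ hfin.toFinset, cfc (Pi.single r 1 : ℝ → ℝ) x := by
    simpa [cfc_const_one ℝ x] using cfc_eq_sum_smul_cfc_single (fun _ ↦ 1) hfin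
  rw [← one_mul (cfc g y - cfc g x), hone, Finset.sum_mul]
  refine Finset.sum_congr rfl fun r hr ↦ ?_
  set P := cfc (Pi.single r 1 : ℝ → ℝ) x
  have hPx : P * x = P * algebraMap ℝ A r := by
    simpa [cfc_id ℝ x, Algebra.commutes', Algebra.smul_def, Algebra.commutes] using
      cfc_single_mul_cfc id hfin r
  have hPg : P * cfc g x = P * algebraMap ℝ A (g r) := by
    rw [cfc_single_mul_cfc g hfin r, Algebra.smul_def, Algebra.commutes]
  rw [mul_sub P, hPg, ← mul_sub, ← sub_algebraMap_mul_cfc_dslope hy hg (hd r (by simpa using hr)),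
    mul_sub P, hPx, ← mul_sub, mul_assoc]

end FiniteSpectrum

section Derivative

variable (𝕜 : Type*) [CommSemiring 𝕜] {A : Type*} [Ring A] [StarRing A] [TopologicalSpace A]
  [IsTopologicalRing A] [Algebra 𝕜 A] [Algebra ℝ A]
  [ContinuousFunctionalCalculus ℝ A IsSelfAdjoint]

/-- The Daleckii–Krein form of the derivative of `cfc g` at `x`, namely `h ↦ ∑ᵣ Pᵣ h g[r, x]` with
`Pᵣ` the spectral projections of `x` and `g[r, ·]` the divided differences of `g` at `r`. It is
meant for `x` of finite spectrum: otherwise the `∑ᶠ` may have the junk value `0`. -/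
noncomputable def cfcDeriv (g : ℝ → ℝ) (x : A) : A →L[𝕜] A where
  toLinearMap := ∑ᶠ r ∈ spectrum ℝ x,
    LinearMap.mulLeftRight 𝕜 (cfc (Pi.single r 1 : ℝ → ℝ) x, cfc (dslope g r) x)
  cont := by
    refine finsum_mem_induction (fun L : A →ₗ[𝕜] A ↦ Continuous L) continuous_zero
      (fun _ _ ↦ Continuous.add) fun r _ ↦ ?_
    exact (continuous_const_mul _).mul_const _

theorem cfcDeriv_apply {x : A} (g : ℝ → ℝ) (hfin : (spectrum ℝ x).Finite) (h : A) :
    cfcDeriv 𝕜 g x h = ∑ r ∈ hfin.toFinset,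
      cfc (Pi.single r 1 : ℝ → ℝ) x * h * cfc (dslope g r) x := by
  change (∑ᶠ r ∈ spectrum ℝ x, _ : A →ₗ[𝕜] A) h = _
  rw [finsum_mem_eq_finite_toFinset_sum _ hfin, LinearMap.sum_apply]
  rfl

theorem map_cfcDeriv {B : Type*} [Ring B] [StarRing B] [TopologicalSpace B] [IsTopologicalRing B]
    [T2Space B] [Algebra 𝕜 B] [Algebra ℝ B] [ContinuousFunctionalCalculus ℝ B IsSelfAdjoint]
    {x : A} (φ : A →⋆ₐ[ℝ] B) (hφ : Continuous φ) (g : ℝ → ℝ) (hx : IsSelfAdjoint x)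
    (hfin : (spectrum ℝ x).Finite) (h : A) :
    φ (cfcDeriv 𝕜 g x h) = cfcDeriv 𝕜 g (φ x) (φ h) := by
  have hsub : spectrum ℝ (φ x) ⊆ spectrum ℝ x := AlgHom.spectrum_apply_subset φ x
  have hfinφ : (spectrum ℝ (φ x)).Finite := hfin.subset hsub
  have hmap (u : ℝ → ℝ) : φ (cfc u x) = cfc u (φ x) :=
    φ.map_cfc u x (hfin.continuousOn u) hφ hx (hx.map φ)
  rw [cfcDeriv_apply 𝕜 g hfin, cfcDeriv_apply 𝕜 g hfinφ, map_sum]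
  simp only [map_mul, hmap]
  refine (Finset.sum_subset (Set.Finite.toFinset_subset_toFinset.2 hsub) fun r _ hr ↦ ?_).symm
  have hzero : cfc (Pi.single r 1 : ℝ → ℝ) (φ x) = 0 := by
    rw [← cfc_const_zero ℝ (φ x)]
    exact cfc_congr fun s hs ↦ Pi.single_eq_of_ne (fun hsr ↦ hr (by simpa [hsr] using hs)) 1
  rw [hzero, zero_mul, zero_mul]

theorem apply_cfcDeriv_of_tracial {x : A} {M : Type*} [AddCommMonoid M] [Module ℝ M] (τ : A →ₗ[ℝ] M)
    (hτ : ∀ a b, τ (a * b) = τ (b * a)) {g g' : ℝ → ℝ} (hfin : (spectrum ℝ x).Finite)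
    (hg : ∀ r ∈ spectrum ℝ x, HasDerivAt g (g' r) r) (h : A) :
    τ (cfcDeriv 𝕜 g x h) = τ (cfc g' x * h) := by
  rw [cfcDeriv_apply 𝕜 g hfin, cfc_eq_sum_smul_cfc_single g' hfin, Finset.sum_mul, map_sum, map_sum]
  refine Finset.sum_congr rfl fun r hr ↦ ?_
  have hdiag : dslope g r r = g' r := by
    rw [dslope_same, (hg r (by simpa using hr)).deriv]
  rw [hτ, ← mul_assoc, (cfc_commute_cfc _ _ x).eq, cfc_single_mul_cfc _ hfin, hdiag]

end Derivative

section CStar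

open scoped Asymptotics

variable {A : Type*} [CStarAlgebra A]

theorem eventually_spectrum_subset {U : Set ℝ} (hU : IsOpen U) {x : A} (hxU : spectrum ℝ x ⊆ U) :
    ∀ᶠ y in nhds x, spectrum ℝ y ⊆ U :=
  ((upperHemicontinuous_spectrum ℝ A).upperHemicontinuousAt x U (hU.mem_nhdsSet.2 hxU)).mono
    fun _ ↦ subset_of_mem_nhdsSet

theorem hasFDerivWithinAt_cfc {g : ℝ → ℝ} {U : Set ℝ} (hU : IsOpen U)
    (hg : DifferentiableOn ℝ g U) {x : A} (hx : IsSelfAdjoint x) (hfin : (spectrum ℝ x).Finite)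
    (hxU : spectrum ℝ x ⊆ U) :
    HasFDerivWithinAt (cfc g) (cfcDeriv ℝ g x) {y : A | IsSelfAdjoint y} x := by
  let T : Set A := {y | IsSelfAdjoint y ∧ spectrum ℝ y ⊆ U}
  suffices HasFDerivWithinAt (cfc g) (cfcDeriv ℝ g x) T x from
    this.mono_of_mem_nhdsWithin <| Filter.inter_mem self_mem_nhdsWithin <|
      mem_nhdsWithin_of_mem_nhds (eventually_spectrum_subset hU hxU)
  have hd : ∀ r ∈ spectrum ℝ x, ContinuousOn (dslope g r) U := fun r hr ↦
    (continuousOn_dslope (hU.mem_nhds (hxU hr))).2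
      ⟨hg.continuousOn, hg.differentiableAt (hU.mem_nhds (hxU hr))⟩
  have hcfc : ∀ r ∈ spectrum ℝ x, ContinuousOn (cfc (dslope g r) : A → A) T := fun r hr ↦
    continuousOn_id.cfc_of_mem_nhdsSet (dslope g r)
      (hU.mem_nhdsSet.2 (Set.iUnion₂_subset fun _ hy ↦ hy.2)) (fun _ hy ↦ hy.1) (hd r hr)
  rw [hasFDerivWithinAt_iff_isLittleO]
  have hexpand : ∀ y ∈ T, cfc g y - cfc g x - cfcDeriv ℝ g x (y - x) =
      ∑ r ∈ hfin.toFinset, cfc (Pi.single r 1 : ℝ → ℝ) x * (y - x) *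
        (cfc (dslope g r) y - cfc (dslope g r) x) := fun y hy ↦ by
    rw [cfc_sub_cfc_eq_sum hx hfin hy.1 (hg.continuousOn.mono hy.2)
      fun r hr ↦ (hd r hr).mono hy.2, cfcDeriv_apply ℝ g hfin, ← Finset.sum_sub_distrib]
    simp only [mul_sub]
  refine Asymptotics.IsLittleO.congr' (Asymptotics.IsLittleO.fun_sum fun r hr ↦ ?_)
    (Filter.eventuallyEq_of_mem self_mem_nhdsWithin fun y hy ↦ (hexpand y hy).symm)
    Filter.EventuallyEq.rfl
  have hrx : r ∈ spectrum ℝ x := by simpa using hr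
  have hlim : Filter.Tendsto (fun y ↦ cfc (dslope g r) y - cfc (dslope g r) x)
      (nhdsWithin x T) (nhds 0) := by
    simpa using ((hcfc r hrx) x ⟨hx, hxU⟩).tendsto.sub_const (cfc (dslope g r) x)
  have hP : (fun y ↦ cfc (Pi.single r 1 : ℝ → ℝ) x * (y - x)) =O[nhdsWithin x T]
      fun y ↦ ‖y - x‖ := ((Asymptotics.isBigO_refl _ _).const_mul_left _).norm_right
  simpa using hP.mul_isLittleO ((Asymptotics.isLittleO_one_iff ℝ).2 hlim)

end CStar

section Convexity

open scoped Pointwise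

variable {E : Type*} [AddCommGroup E] [Module ℝ E] {s : Set E}

theorem convexOn_of_hasLineDerivAt2_nonneg (hs : Convex ℝ s) {F : E → ℝ} {F' F'' : E → E → ℝ}
    (hF' : ∀ z ∈ s, ∀ v ∈ s - s, HasLineDerivAt ℝ F (F' z v) z v)
    (hF'' : ∀ z ∈ s, ∀ v ∈ s - s, HasLineDerivAt ℝ (F' · v) (F'' z v) z v)
    (hF''₀ : ∀ z ∈ s, ∀ v ∈ s - s, 0 ≤ F'' z v) : ConvexOn ℝ s F := by
  refine ⟨hs, fun x hx y hy a b ha hb hab ↦ ?_⟩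
  have hv : y - x ∈ s - s := Set.sub_mem_sub hy hx
  have hmem : ∀ t ∈ Set.Icc (0 : ℝ) 1, x + t • (y - x) ∈ s := fun t ht ↦
    hs.add_smul_sub_mem hx hy ht
  have hline {G : E → ℝ} {c t : ℝ} (h : HasLineDerivAt ℝ G c (x + t • (y - x)) (y - x)) :
      HasDerivAt (fun r ↦ G (x + r • (y - x))) c t := by
    rw [HasLineDerivAt, ← sub_self t] at h
    refine (h.comp_sub_const t t).congr_of_eventuallyEq (.of_forall fun r ↦ ?_)
    simp only [add_assoc, ← add_smul, add_sub_cancel]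
  have hconv : ConvexOn ℝ (Set.Icc 0 1) fun t : ℝ ↦ F (x + t • (y - x)) :=
    convexOn_of_hasDerivWithinAt2_nonneg (convex_Icc 0 1)
      (fun t ht ↦ (hline (hF' _ (hmem t ht) _ hv)).continuousAt.continuousWithinAt)
      (fun t ht ↦ (hline (hF' _ (hmem t (interior_subset ht)) _ hv)).hasDerivWithinAt)
      (fun t ht ↦ (hline (hF'' _ (hmem t (interior_subset ht)) _ hv)).hasDerivWithinAt)
      fun t ht ↦ hF''₀ _ (hmem t (interior_subset ht)) _ hv
  have hcomb : x + b • (y - x) = a • x + b • y := by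
    rw [eq_sub_of_add_eq hab]
    module
  simpa [hcomb] using hconv.2 (Set.left_mem_Icc.2 zero_le_one) (Set.right_mem_Icc.2 zero_le_one)
    ha hb hab

theorem hasLineDerivAt_comp_linearMap {E' : Type*} [AddCommGroup E'] [Module ℝ E']
    {F : E' → ℝ} {c : ℝ} (L : E →ₗ[ℝ] E') {z v : E} (h : HasLineDerivAt ℝ F c (L z) (L v)) :
    HasLineDerivAt ℝ (fun y ↦ F (L y)) c z v := by
  simpa only [HasLineDerivAt, map_add, map_smul] using h

end Convexity

section StarHom

open scoped Kronecker

variable {m n A R : Type*} [Fintype m] [DecidableEq m] [Fintype n] [DecidableEq n]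
  [CommSemiring R]

/-- Relabelling the rows and columns of a square matrix along `e`, as a star-algebra
homomorphism. -/
def reindexStarAlgHom [Semiring A] [StarRing A] [Algebra R A] (e : m ≃ n) :
    Matrix m m A →⋆ₐ[R] Matrix n n A where
  toAlgHom := (Matrix.reindexAlgEquiv R A e : Matrix m m A →ₐ[R] Matrix n n A)
  map_star' x := conjTranspose_submatrix x e.symm e.symm

variable (R) (k : Type*) [Fintype k] [DecidableEq k]

/-- The ampliation `x ↦ x ⊗ 1` as a star-algebra homomorphism. -/
def ampliation [CommSemiring A] [StarRing A] [Algebra R A] :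
    Matrix m m A →⋆ₐ[R] Matrix (m × k) (m × k) A where
  toFun x := x ⊗ₖ (1 : Matrix k k A)
  map_one' := one_kronecker_one
  map_mul' x y := by rw [← mul_kronecker_mul, one_mul]
  map_zero' := zero_kronecker _
  map_add' x y := add_kronecker x y _
  commutes' r := by
    rw [Algebra.algebraMap_eq_smul_one, smul_kronecker, one_kronecker_one,
      Algebra.algebraMap_eq_smul_one]
  map_star' x := by simp [star_eq_conjTranspose, conjTranspose_kronecker]

theorem trace_ampliation [CommRing A] [StarRing A] [Algebra R A] (x : Matrix m m A) :
    trace (ampliation R k x) = Fintype.card k • trace x := by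
  refine (trace_kronecker x 1).trans ?_
  rw [trace_one, mul_comm, nsmul_eq_mul]

end StarHom

theorem isLinearMap_ptrace {m k : Type*} [Fintype k] :
    IsLinearMap ℝ (ptrace : Matrix (m × k) (m × k) ℂ → Matrix m m ℂ) where
  map_add x y := by ext i j; simp [ptrace, Finset.sum_add_distrib]
  map_smul c x := by ext i j; simp [ptrace, Finset.mul_sum]

section PosDef

theorem convex_posDef {m : Type*} : Convex ℝ {x : Matrix m m ℂ | x.PosDef} :=
  convex_iff_forall_pos.2 fun _ hx _ hy _ _ ha hb _ ↦ (hx.smul ha).add (hy.smul hb)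

theorem posDef_nsmul {m : Type*} {d : ℕ} (hd : 0 < d) {x : Matrix m m ℂ} (hx : x.PosDef) :
    (d • x).PosDef := by
  rw [← Nat.cast_smul_eq_nsmul ℝ]
  exact hx.smul (Nat.cast_pos.2 hd)

theorem ptrace_posDef {m k : Type*} [Fintype k] [Nonempty k] {ρ : Matrix (m × k) (m × k) ℂ}
    (hρ : ρ.PosDef) : (ptrace ρ).PosDef := by
  have hsum : ptrace ρ = ∑ c : k, ρ.submatrix (fun i ↦ (i, c)) (fun i ↦ (i, c)) := by
    ext i j
    simp [ptrace, Matrix.sum_apply]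
  rw [hsum]
  exact posDef_sum Finset.univ_nonempty fun c _ ↦ hρ.submatrix (Prod.mk_left_injective c)

open scoped Pointwise in
theorem isHermitian_map_of_mem_sub {n E : Type*} [AddCommGroup E] [Module ℝ E] {s : Set E}
    {L : E →ₗ[ℝ] Matrix n n ℂ} (hL : ∀ x ∈ s, (L x).PosDef) {v : E} (hv : v ∈ s - s) :
    (L v).IsHermitian := by
  obtain ⟨x, hx, y, hy, rfl⟩ := hv
  rw [map_sub]
  exact (hL x hx).1.sub (hL y hy).1

variable {m n : Type*} [Fintype m] [DecidableEq m] [Fintype n] [DecidableEq n]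

theorem posDef_spectrum_subset_Ioi {x : Matrix m m ℂ} (hx : x.PosDef) :
    spectrum ℝ x ⊆ Set.Ioi 0 := by
  rw [hx.1.spectrum_real_eq_range_eigenvalues]
  exact Set.range_subset_iff.2 hx.eigenvalues_pos

open scoped MatrixOrder in
theorem posDef_map_starAlgHom (φ : Matrix m m ℂ →⋆ₐ[ℝ] Matrix n n ℂ) {x : Matrix m m ℂ}
    (hx : x.PosDef) : (φ x).PosDef := by
  obtain ⟨b, hb⟩ := CStarAlgebra.nonneg_iff_eq_star_mul_self.1 hx.posSemidef.nonneg
  have hsemi : (φ x).PosSemidef := by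
    rw [hb, map_mul, map_star]
    exact posSemidef_conjTranspose_mul_self _
  exact hsemi.posDef_iff_isUnit.2 (hx.isUnit.map φ)

end PosDef

section TraceHessian

open scoped Pointwise

variable {m n : Type*} [Fintype m] [DecidableEq m] [Fintype n] [DecidableEq n]

theorem matFun_eq_cfc (g : ℝ → ℝ) : (matFun g : Matrix m m ℂ → Matrix m m ℂ) = cfc g := by
  ext1 x
  by_cases hx : x.IsHermitian
  · rw [hx.cfc_eq, matFun, dif_pos hx]
    rfl
  · rw [matFun, dif_neg hx, cfc_apply_of_not_predicate (p := IsSelfAdjoint) x hx]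

-- `HasFDerivWithinAt` depends only on the topology, so the C⋆-norm may replace the entrywise norm.
open scoped Matrix.Norms.L2Operator in
theorem isFDerivMatFun_cfcDeriv {g : ℝ → ℝ} {U : Set ℝ} (hU : IsOpen U)
    (hg : DifferentiableOn ℝ g U) {x : Matrix m m ℂ} (hx : x.IsHermitian)
    (hxU : spectrum ℝ x ⊆ U) : IsFDerivMatFun g x (cfcDeriv ℂ g x) := by
  have hD : cfcDeriv ℝ g x = (cfcDeriv ℂ g x).restrictScalars ℝ := by
    ext1 h
    rw [ContinuousLinearMap.coe_restrictScalars', cfcDeriv_apply ℝ g x.finite_real_spectrum,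
      cfcDeriv_apply ℂ g x.finite_real_spectrum]
  rw [IsFDerivMatFun, matFun_eq_cfc, ← hD]
  exact hasFDerivWithinAt_cfc hU hg hx x.finite_real_spectrum hxU

theorem IsFDerivMatFun.hasLineDerivAt {g : ℝ → ℝ} {x v : Matrix m m ℂ}
    {D : Matrix m m ℂ →L[ℂ] Matrix m m ℂ} (hD : IsFDerivMatFun g x D) (hx : x.IsHermitian)
    (hv : v.IsHermitian) : HasLineDerivAt ℝ (matFun g) (D v) x v :=
  (HasFDerivWithinAt.hasLineDerivWithinAt hD v).hasLineDerivAt'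
    (.of_forall fun t ↦ hx.add (hv.smul (IsSelfAdjoint.all t)))

theorem IsFDerivMatFun.hasLineDerivAt_re_trace_mul {g : ℝ → ℝ} {x v : Matrix m m ℂ}
    {D : Matrix m m ℂ →L[ℂ] Matrix m m ℂ} (hD : IsFDerivMatFun g x D) (hx : x.IsHermitian)
    (hv : v.IsHermitian) (w : Matrix m m ℂ) :
    HasLineDerivAt ℝ (fun y ↦ (trace (matFun g y * w)).re) (trace (D v * w)).re x v :=
  let τ : Matrix m m ℂ →ₗ[ℝ] ℝ := Complex.reLm ∘ₗ traceLinearMap m ℝ ℂ ∘ₗ LinearMap.mulRight ℝ w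
  τ.toContinuousLinearMap.hasFDerivAt.comp_hasDerivAt (0 : ℝ) (hD.hasLineDerivAt hx hv)

/-- The quadratic form `Tr (h* · Dg(x) h)` attached to the matrix function of `g`. At Hermitian `h`
it is the Hessian of `Tr G` for any primitive `G` of `g`. -/
noncomputable def traceHessian (g : ℝ → ℝ) (x h : Matrix m m ℂ) : ℝ :=
  (trace (hᴴ * cfcDeriv ℂ g x h)).re

theorem traceHessian_map {φ : Matrix m m ℂ →⋆ₐ[ℝ] Matrix n n ℂ} {c : ℕ}
    (hφ : ∀ a, trace (φ a) = c • trace a) (g : ℝ → ℝ) {x : Matrix m m ℂ} (hx : x.IsHermitian)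
    (h : Matrix m m ℂ) : traceHessian g (φ x) (φ h) = c • traceHessian g x h := by
  have hcont : Continuous φ := φ.toLinearMap.continuous_of_finiteDimensional
  rw [traceHessian, traceHessian, ← map_cfcDeriv ℂ φ hcont g hx x.finite_real_spectrum,
    ← star_eq_conjTranspose, ← map_star, ← map_mul, hφ, Complex.re_nsmul, star_eq_conjTranspose]

theorem hasLineDerivAt_re_trace_matFun {g g' : ℝ → ℝ} {U : Set ℝ} (hU : IsOpen U)
    (hg : ∀ t ∈ U, HasDerivAt g (g' t) t) {x v : Matrix m m ℂ} (hx : x.IsHermitian)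
    (hxU : spectrum ℝ x ⊆ U) (hv : v.IsHermitian) :
    HasLineDerivAt ℝ (fun y ↦ (trace (matFun g y)).re) (trace (matFun g' x * v)).re x v := by
  have hD := isFDerivMatFun_cfcDeriv hU
    (fun t ht ↦ (hg t ht).differentiableAt.differentiableWithinAt) hx hxU
  have htr : trace (cfcDeriv ℂ g x v) = trace (matFun g' x * v) := by
    rw [matFun_eq_cfc]
    exact apply_cfcDeriv_of_tracial ℂ (traceLinearMap m ℝ ℂ) trace_mul_comm x.finite_real_spectrum
      (fun r hr ↦ hg r (hxU hr)) v
  simpa only [mul_one, htr] using hD.hasLineDerivAt_re_trace_mul hx hv 1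

theorem hasLineDerivAt_re_trace_matFun_mul {g : ℝ → ℝ} {U : Set ℝ} (hU : IsOpen U)
    (hg : DifferentiableOn ℝ g U) {x v : Matrix m m ℂ} (hx : x.IsHermitian)
    (hxU : spectrum ℝ x ⊆ U) (hv : v.IsHermitian) :
    HasLineDerivAt ℝ (fun y ↦ (trace (matFun g y * v)).re) (traceHessian g x v) x v := by
  rw [traceHessian, hv.eq, trace_mul_comm]
  exact (isFDerivMatFun_cfcDeriv hU hg hx hxU).hasLineDerivAt_re_trace_mul hx hv v

theorem IsMatrixEntropy.differentiableOn {f f' : ℝ → ℝ} (hf : IsMatrixEntropy f f') :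
    DifferentiableOn ℝ f' (Set.Ioi 0) := by
  have hderiv : DifferentiableOn ℝ (deriv f) (Set.Ioi 0) :=
    ((contDiffOn_succ_iff_deriv_of_isOpen (n := 1) isOpen_Ioi).1 hf.1).2.2.differentiableOn
      one_ne_zero
  exact hderiv.congr fun t ht ↦ (hf.2.1 t ht).deriv.symm

theorem IsMatrixEntropy.convexOn_traceHessian {f f' : ℝ → ℝ} (hf : IsMatrixEntropy f f')
    (m : Type*) [Fintype m] [DecidableEq m] :
    ConvexOn ℝ {q : Matrix m m ℂ × Matrix m m ℂ | q.1.PosDef}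
      fun q ↦ traceHessian f' q.1 q.2 := by
  let φ : Matrix m m ℂ →⋆ₐ[ℝ] Matrix (Fin (Fintype.card m)) (Fin (Fintype.card m)) ℂ :=
    reindexStarAlgHom (Fintype.equivFin m)
  have hφ (a : Matrix m m ℂ) : trace (φ a) = 1 • trace a := by
    rw [one_smul]
    exact Equiv.sum_comp (Fintype.equivFin m).symm fun i ↦ a i i
  have hFin := hf.2.2 (Fintype.card m) (cfcDeriv ℂ f') fun x hx ↦
    isFDerivMatFun_cfcDeriv isOpen_Ioi hf.differentiableOn hx.1 (posDef_spectrum_subset_Ioi hx)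
  refine ((hFin.comp_linearMap (φ.toLinearMap.prodMap φ.toLinearMap)).subset
    (fun q hq ↦ posDef_map_starAlgHom φ hq) ?_).congr fun q hq ↦ ?_
  · exact convex_posDef.linear_preimage (LinearMap.fst ℝ _ _)
  · exact (traceHessian_map hφ f' hq.1 q.2).trans (one_smul ℕ _)

variable {E : Type*} [AddCommGroup E] [Module ℝ E] {s : Set E} {L : E →ₗ[ℝ] Matrix m m ℂ}
  {f f' : ℝ → ℝ}

theorem IsMatrixEntropy.hasLineDerivAt_re_trace_matFun_comp (hf : IsMatrixEntropy f f')
    (hL : ∀ x ∈ s, (L x).PosDef) {z v : E} (hz : z ∈ s) (hv : v ∈ s - s) :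
    HasLineDerivAt ℝ (fun y ↦ (trace (matFun f (L y))).re)
      (trace (matFun f' (L z) * L v)).re z v :=
  hasLineDerivAt_comp_linearMap L <|
    hasLineDerivAt_re_trace_matFun isOpen_Ioi hf.2.1 (hL z hz).1
      (posDef_spectrum_subset_Ioi (hL z hz)) (isHermitian_map_of_mem_sub hL hv)

theorem IsMatrixEntropy.hasLineDerivAt_re_trace_matFun_mul_comp (hf : IsMatrixEntropy f f')
    (hL : ∀ x ∈ s, (L x).PosDef) {z v : E} (hz : z ∈ s) (hv : v ∈ s - s) :
    HasLineDerivAt ℝ (fun y ↦ (trace (matFun f' (L y) * L v)).re)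
      (traceHessian f' (L z) (L v)) z v :=
  hasLineDerivAt_comp_linearMap (F := fun y ↦ (trace (matFun f' y * L v)).re) L <|
    hasLineDerivAt_re_trace_matFun_mul isOpen_Ioi hf.differentiableOn (hL z hz).1
      (posDef_spectrum_subset_Ioi (hL z hz)) (isHermitian_map_of_mem_sub hL hv)

end TraceHessian

section Twirl

variable {m k : Type*} [Fintype m] [DecidableEq m] [Fintype k] [DecidableEq k]

theorem card_nsmul_sum_perm_apply {M : Type*} [AddCommMonoid M] (F : k → M) (a : k) :
    Fintype.card k • ∑ π : Equiv.Perm k, F (π a) =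
      Fintype.card (Equiv.Perm k) • ∑ b, F b := by
  have hindep (b : k) : ∑ π : Equiv.Perm k, F (π b) = ∑ π : Equiv.Perm k, F (π a) := by
    simpa using (Equiv.sum_comp (Equiv.mulRight (Equiv.swap a b)) fun π ↦ F (π b)).symm
  calc Fintype.card k • ∑ π : Equiv.Perm k, F (π a)
      = ∑ b, ∑ π : Equiv.Perm k, F (π b) := by simp [hindep]
    _ = ∑ π : Equiv.Perm k, ∑ b, F (π b) := Finset.sum_comm
    _ = Fintype.card (Equiv.Perm k) • ∑ b, F b := by simp [Equiv.sum_comp]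

theorem sum_signs_mul {R : Type*} [Ring R] [IsAddTorsionFree R] (a b : k) :
    ∑ s : k → ℤˣ, ((s a * s b : ℤˣ) : R) = if a = b then (Fintype.card (k → ℤˣ) : R) else 0 := by
  split_ifs with hab
  · simp [hab, Finset.card_univ, Int.units_mul_self]
  · have hflip := Equiv.sum_comp (Equiv.mulLeft (Pi.mulSingle a (-1) : k → ℤˣ))
      fun s ↦ (((s a * s b : ℤˣ) : ℤ) : R)
    rw [← self_eq_neg]
    simpa [Pi.mulSingle_eq_of_ne (Ne.symm hab)] using hflip.symm

/-- The unitary `1 ⊗ diag(s)` for a choice of signs `s`. -/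
def signUnitary {A : Type*} [Ring A] [StarRing A] (s : k → ℤˣ) :
    unitary (Matrix (m × k) (m × k) A) where
  val := diagonal fun p ↦ ((s p.2 : ℤ) : A)
  property := by
    simp [Unitary.mem_iff, star_eq_conjTranspose, diagonal_conjTranspose, Pi.star_def,
      ← Int.cast_mul, ← Units.val_mul, Int.units_mul_self]

/-- Conjugation by the unitary `1 ⊗ W` for the signed permutation matrix `W` with signs `u.1` and
permutation `u.2`. These unitaries form a finite group acting irreducibly, so averaging over it
replaces the integral over the unitary group of the second factor. -/
noncomputable def conjSignedPerm (u : (k → ℤˣ) × Equiv.Perm k) :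
    Matrix (m × k) (m × k) ℂ →⋆ₐ[ℝ] Matrix (m × k) (m × k) ℂ :=
  (Unitary.conjStarAlgAut ℝ (Matrix (m × k) (m × k) ℂ) (signUnitary u.1) :
    Matrix (m × k) (m × k) ℂ →⋆ₐ[ℝ] Matrix (m × k) (m × k) ℂ).comp
    (reindexStarAlgHom (.prodCongr (.refl m) u.2.symm))

theorem conjSignedPerm_apply (u : (k → ℤˣ) × Equiv.Perm k)
    (ρ : Matrix (m × k) (m × k) ℂ) (i j : m) (a b : k) :
    conjSignedPerm u ρ (i, a) (j, b) = ((u.1 a * u.1 b : ℤˣ) : ℂ) * ρ (i, u.2 a) (j, u.2 b) := by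
  have hconj : conjSignedPerm u ρ = diagonal (fun p : m × k ↦ ((u.1 p.2 : ℤ) : ℂ)) *
      ρ.submatrix (Prod.map id u.2) (Prod.map id u.2) *
        (diagonal fun p : m × k ↦ ((u.1 p.2 : ℤ) : ℂ))ᴴ := rfl
  rw [hconj]
  simp [diagonal_conjTranspose, mul_right_comm]

theorem trace_conjSignedPerm (u : (k → ℤˣ) × Equiv.Perm k)
    (ρ : Matrix (m × k) (m × k) ℂ) : trace (conjSignedPerm u ρ) = trace ρ := by
  simp only [trace, diag_apply, Fintype.sum_prod_type, conjSignedPerm_apply, Int.units_mul_self,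
    Units.val_one, Int.cast_one, one_mul]
  exact Finset.sum_congr rfl fun i _ ↦ Equiv.sum_comp u.2 fun a ↦ ρ (i, a) (i, a)

theorem card_nsmul_sum_conjSignedPerm (ρ : Matrix (m × k) (m × k) ℂ) :
    Fintype.card k • ∑ u, conjSignedPerm u ρ =
      Fintype.card ((k → ℤˣ) × Equiv.Perm k) • ampliation ℝ k (ptrace ρ) := by
  ext p q
  obtain ⟨i, a⟩ := p
  obtain ⟨j, b⟩ := q
  have hsum : (∑ u, conjSignedPerm u ρ) (i, a) (j, b) =
      (∑ s : k → ℤˣ, ((s a * s b : ℤˣ) : ℂ)) * ∑ π : Equiv.Perm k, ρ (i, π a) (j, π b) := by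
    simp_rw [Matrix.sum_apply, conjSignedPerm_apply, Fintype.sum_prod_type, Finset.sum_mul_sum]
  have hamp : ampliation ℝ k (ptrace ρ) (i, a) (j, b) =
      (∑ c, ρ (i, c) (j, c)) * if a = b then 1 else 0 := rfl
  rw [Matrix.smul_apply, Matrix.smul_apply, hsum, hamp, sum_signs_mul]
  obtain rfl | hab := eq_or_ne a b
  · have hperm := card_nsmul_sum_perm_apply (fun c ↦ ρ (i, c) (j, c)) a
    rw [if_pos rfl, if_pos rfl, mul_one, Fintype.card_prod, mul_comm (Fintype.card _), mul_nsmul,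
      ← hperm, ← nsmul_eq_mul, nsmul_left_comm]
  · simp [hab]

theorem average_conjSignedPerm [Nonempty k] (ρ : Matrix (m × k) (m × k) ℂ) :
    (Fintype.card ((k → ℤˣ) × Equiv.Perm k) : ℝ)⁻¹ • ∑ u, conjSignedPerm u (Fintype.card k • ρ) =
      ampliation ℝ k (ptrace ρ) := by
  have hU : (Fintype.card ((k → ℤˣ) × Equiv.Perm k) : ℝ) ≠ 0 :=
    Nat.cast_ne_zero.2 Fintype.card_ne_zero
  rw [inv_smul_eq_iff₀ hU, Nat.cast_smul_eq_nsmul ℝ, ← card_nsmul_sum_conjSignedPerm,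
    Finset.smul_sum]
  exact Finset.sum_congr rfl fun u _ ↦ map_nsmul (conjSignedPerm u) _ ρ

theorem IsMatrixEntropy.traceHessian_average_le {f f' : ℝ → ℝ} (hf : IsMatrixEntropy f f')
    {U : Type*} [Fintype U] [Nonempty U] {φ : U → Matrix m m ℂ →⋆ₐ[ℝ] Matrix m m ℂ}
    (hφ : ∀ u a, trace (φ u a) = trace a) {z : Matrix m m ℂ} (hz : z.PosDef) (v : Matrix m m ℂ) :
    traceHessian f' ((Fintype.card U : ℝ)⁻¹ • ∑ u, φ u z) ((Fintype.card U : ℝ)⁻¹ • ∑ u, φ u v) ≤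
      traceHessian f' z v := by
  have hinv (u : U) : traceHessian f' (φ u z) (φ u v) = traceHessian f' z v := by
    simpa using traceHessian_map (c := 1) (by simpa using hφ u) f' hz.1 v
  have hU : (Fintype.card U : ℝ) ≠ 0 := Nat.cast_ne_zero.2 Fintype.card_ne_zero
  have hJensen := (hf.convexOn_traceHessian m).map_sum_le (t := Finset.univ)
    (w := fun _ : U ↦ (Fintype.card U : ℝ)⁻¹) (p := fun u ↦ (φ u z, φ u v))
    (fun _ _ ↦ by positivity) (by simp [hU]) (fun u _ ↦ posDef_map_starAlgHom (φ u) hz)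
  simpa [Prod.fst_sum, Prod.snd_sum, ← Finset.smul_sum, hinv, hU] using hJensen

theorem IsMatrixEntropy.card_nsmul_traceHessian_ptrace_le [Nonempty k] {f f' : ℝ → ℝ}
    (hf : IsMatrixEntropy f f') {z : Matrix (m × k) (m × k) ℂ} (hz : z.PosDef)
    (v : Matrix (m × k) (m × k) ℂ) :
    Fintype.card k • traceHessian f' (ptrace z) (ptrace v) ≤
      traceHessian f' (Fintype.card k • z) (Fintype.card k • v) := by
  have havg := hf.traceHessian_average_le trace_conjSignedPerm
    (posDef_nsmul (Fintype.card_pos (α := k)) hz) (Fintype.card k • v)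
  rwa [average_conjSignedPerm, average_conjSignedPerm,
    traceHessian_map (trace_ampliation ℝ k) f' (ptrace_posDef hz).1] at havg

end Twirl

/-- If `f` is a matrix entropy, then
`G(ρ) = d₂⁻¹ · Tr₁₂ f(d₂ρ) − Tr₁ f(ρ₁)` is convex on the positive definite operators on
`H = H₁ ⊗ H₂`, where `ρ₁ = Tr₂ ρ` and `d₂ = dim H₂`. -/
theorem matrixEntropy_sub_partialTrace_convex
    {ι₁ ι₂ : Type*} [Fintype ι₁] [DecidableEq ι₁] [Fintype ι₂] [DecidableEq ι₂]
    (f f' : ℝ → ℝ) (hf : IsMatrixEntropy f f')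
    (d₂ : ℕ) (hd₂ : d₂ = Fintype.card ι₂) :
    ConvexOn ℝ {ρ : Matrix (ι₁ × ι₂) (ι₁ × ι₂) ℂ | ρ.PosDef}
      (fun ρ => (d₂ : ℝ)⁻¹ * (Matrix.trace (matFun f ((d₂ : ℂ) • ρ))).re
        - (Matrix.trace (matFun f (ptrace ρ))).re) := by
  obtain _ | _ := isEmpty_or_nonempty ι₂
  · refine (convexOn_const (-(trace (matFun f (ptrace (0 : Matrix (ι₁ × ι₂) _ ℂ)))).re)
      convex_posDef).congr fun ρ _ ↦ ?_
    simp [Subsingleton.elim ρ 0]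
  have hd : 0 < d₂ := hd₂ ▸ Fintype.card_pos
  let S : Matrix (ι₁ × ι₂) (ι₁ × ι₂) ℂ →ₗ[ℝ] Matrix (ι₁ × ι₂) (ι₁ × ι₂) ℂ := d₂ • LinearMap.id
  let T : Matrix (ι₁ × ι₂) (ι₁ × ι₂) ℂ →ₗ[ℝ] Matrix ι₁ ι₁ ℂ := isLinearMap_ptrace.mk' ptrace
  have hS : ∀ ρ ∈ {ρ : Matrix (ι₁ × ι₂) (ι₁ × ι₂) ℂ | ρ.PosDef}, (S ρ).PosDef :=
    fun _ ↦ posDef_nsmul hd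
  have hT : ∀ ρ ∈ {ρ : Matrix (ι₁ × ι₂) (ι₁ × ι₂) ℂ | ρ.PosDef}, (T ρ).PosDef :=
    fun _ ↦ ptrace_posDef
  simp_rw [Nat.cast_smul_eq_nsmul ℂ]
  refine convexOn_of_hasLineDerivAt2_nonneg convex_posDef
    (fun z hz v hv ↦ .sub (.const_mul _ (hf.hasLineDerivAt_re_trace_matFun_comp hS hz hv))
      (hf.hasLineDerivAt_re_trace_matFun_comp hT hz hv))
    (fun z hz v hv ↦ .sub (.const_mul _ (hf.hasLineDerivAt_re_trace_matFun_mul_comp hS hz hv))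
      (hf.hasLineDerivAt_re_trace_matFun_mul_comp hT hz hv)) fun z hz v _ ↦ ?_
  have hle := hf.card_nsmul_traceHessian_ptrace_le hz v
  rw [← hd₂, nsmul_eq_mul] at hle
  exact sub_nonneg.2 ((le_inv_mul_iff₀ (Nat.cast_pos.2 hd)).2 hle)
end

section
/- Let H₁ and H₂ be finite-dimensional complex Hilbert spaces and H = H₁ ⊗ H₂. The function ρ ↦ S(ρ) − S(ρ₁) is concave on the set of positive definite operators ρ on H, where S(ρ) = −Tr(ρ log ρ) is the von Neumann entropy and ρ₁ = Tr₂ ρ is the partial trace of ρ over H₂. That is, for all positive definite ρ, σ on H and all t ∈ [0,1], S(tρ + (1−t)σ) − S((tρ + (1−t)σ)₁) ≥ t(S(ρ) − S(ρ₁)) + (1−t)(S(σ) − S(σ₁)). -/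
open Matrix
open scoped ComplexOrder

attribute [local instance] Matrix.normedAddCommGroup Matrix.normedSpace

/-- The von Neumann entropy `S(ρ) = −Tr(ρ log ρ)`. -/
noncomputable def vnEntropy {m : Type*} [Fintype m] [DecidableEq m]
    (ρ : Matrix m m ℂ) : ℝ :=
  -(Matrix.trace (ρ * matFun Real.log ρ)).re

/-!
Since `log (ρ₁ ⊗ 1) = log ρ₁ ⊗ 1`, one has `S(ρ) - S(ρ₁) = -D(ρ ‖ ρ₁ ⊗ 1)` with the relative
entropy `D(A ‖ B) = Tr A (log A - log B)`, and `ρ ↦ (ρ, ρ₁ ⊗ 1)` is linear; so it suffices that `D`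
is jointly convex. For positive numbers,
`x log x - x log y = ∫₀¹ (1 - s) (x - y)² / (s x + (1 - s) y) ds + x - y`.
Integrating this over the pairs of eigenvalues of `A` and `B`, weighted by the overlaps of their
eigenvectors, gives
`D(A ‖ B) = ∫₀¹ (1 - s) ⟨A - B, (s L_A + (1 - s) R_B)⁻¹ (A - B)⟩ ds + Tr A - Tr B`,
where `L_A` and `R_B` denote left and right multiplication. The integrand is jointly convex because
`(T, v) ↦ ⟨v, T⁻¹ v⟩` is, by a Schur complement argument.
-/

open scoped Kronecker

section MatrixFractional

variable {m n 𝕜 : Type*} [RCLike 𝕜]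

theorem convex_setOf_posDef : Convex ℝ {A : Matrix n n 𝕜 | A.PosDef} := by
  rw [convex_iff_forall_pos]
  intro A hA B hB a b ha hb _
  exact (PosDef.smul hA ha).add (PosDef.smul hB hb)

theorem convex_setOf_fst_posDef {E : Type*} [AddCommGroup E] [Module ℝ E] :
    Convex ℝ {q : Matrix n n 𝕜 × E | q.1.PosDef} :=
  (convex_setOf_posDef (n := n) (𝕜 := 𝕜)).linear_preimage (LinearMap.fst ℝ _ E)

theorem posSemidef_fromBlocks_iff_of_posDef [Fintype m] [DecidableEq m] [Finite n]
    {T : Matrix m m 𝕜} (hT : T.PosDef) (B : Matrix m n 𝕜) (D : Matrix n n 𝕜) :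
    (fromBlocks T B Bᴴ D).PosSemidef ↔ (D - Bᴴ * T⁻¹ * B).PosSemidef := by
  have := hT.isUnit.invertible
  rw [hT.fromBlocks₁₁]

theorem posSemidef_fromBlocks_conjTranspose_mul_inv_mul [Fintype m] [DecidableEq m] [Finite n]
    {T : Matrix m m 𝕜} (hT : T.PosDef) (B : Matrix m n 𝕜) :
    (fromBlocks T B Bᴴ (Bᴴ * T⁻¹ * B)).PosSemidef := by
  rw [posSemidef_fromBlocks_iff_of_posDef hT, sub_self]
  exact PosSemidef.zero

-- `Bᴴ T⁻¹ B` is the least `D` making the block matrix `[T, B; Bᴴ, D]` positive semidefinite,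
-- and that constraint on `(T, B, D)` is convex.
open scoped MatrixOrder in
theorem convexOn_conjTranspose_mul_inv_mul [Fintype m] [DecidableEq m] [Finite n] :
    ConvexOn ℝ {q : Matrix m m 𝕜 × Matrix m n 𝕜 | q.1.PosDef}
      (fun q => q.2ᴴ * q.1⁻¹ * q.2) := by
  refine ⟨convex_setOf_fst_posDef, fun p hp q hq a b ha hb hab => ?_⟩
  have hblock : (fromBlocks (a • p.1 + b • q.1) (a • p.2 + b • q.2) (a • p.2 + b • q.2)ᴴ
      (a • (p.2ᴴ * p.1⁻¹ * p.2) + b • (q.2ᴴ * q.1⁻¹ * q.2))).PosSemidef := by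
    have hpq := ((posSemidef_fromBlocks_conjTranspose_mul_inv_mul hp p.2).smul ha).add
      ((posSemidef_fromBlocks_conjTranspose_mul_inv_mul hq q.2).smul hb)
    simpa [fromBlocks_smul, fromBlocks_add] using hpq
  exact (posSemidef_fromBlocks_iff_of_posDef (convex_setOf_posDef hp hq ha hb hab) _ _).1 hblock

theorem convexOn_re_star_dotProduct_inv_mulVec [Fintype m] [DecidableEq m] :
    ConvexOn ℝ {q : Matrix m m 𝕜 × (m → 𝕜) | q.1.PosDef}
      (fun q => RCLike.re (star q.2 ⬝ᵥ q.1⁻¹ *ᵥ q.2)) := by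
  have entry (T : Matrix m m 𝕜) (v : m → 𝕜) :
      star v ⬝ᵥ T⁻¹ *ᵥ v = ((replicateCol Unit v)ᴴ * T⁻¹ * replicateCol Unit v) () () :=
    dotProduct_mulVec _ _ _
  refine ⟨convex_setOf_fst_posDef, fun p hp q hq a b ha hb hab => ?_⟩
  have hle := convexOn_conjTranspose_mul_inv_mul.2 (x := (p.1, replicateCol Unit p.2)) hp
    (y := (q.1, replicateCol Unit q.2)) hq ha hb hab
  have hre := RCLike.nonneg_iff.1 (PosSemidef.diag_nonneg hle (i := ())) |>.1
  simp only [entry, smul_eq_mul]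
  simpa [RCLike.smul_re] using hre

end MatrixFractional

section matFun

variable {m n : Type*} [Fintype m] [DecidableEq m] [Fintype n] [DecidableEq n]
  {A : Matrix m m ℂ}

theorem matFun_eq_cfc_s2 (f : ℝ → ℝ) (hA : A.IsHermitian) : matFun f A = cfc f A := by
  rw [matFun, dif_pos hA, hA.cfc_eq, IsHermitian.cfc, Unitary.conjStarAlgAut_apply]
  rfl

theorem continuousOn_spectrum (f : ℝ → ℝ) (A : Matrix m m ℂ) : ContinuousOn f (spectrum ℝ A) :=
  A.finite_real_spectrum.continuousOn f

theorem matFun_mul_matFun (f g : ℝ → ℝ) (hA : A.IsHermitian) :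
    matFun f A * matFun g A = matFun (fun x => f x * g x) A := by
  simp only [matFun_eq_cfc_s2 _ hA]
  exact (cfc_mul f g A (continuousOn_spectrum f A) (continuousOn_spectrum g A)).symm

theorem matFun_id (hA : A.IsHermitian) : matFun (fun x => x) A = A := by
  rw [matFun_eq_cfc_s2 _ hA]
  exact cfc_id' ℝ A hA

theorem matFun_const_one (hA : A.IsHermitian) : matFun (fun _ => 1) A = 1 :=
  (matFun_eq_cfc_s2 _ hA).trans (cfc_const_one ℝ A hA)

theorem map_matFun (φ : Matrix m m ℂ →⋆ₐ[ℂ] Matrix n n ℂ) (f : ℝ → ℝ)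
    (hA : A.IsHermitian) : φ (matFun f A) = matFun f (φ A) := by
  have hφA : (φ A).IsHermitian := hA.isSelfAdjoint.map φ
  rw [matFun_eq_cfc_s2 f hA, matFun_eq_cfc_s2 f hφA]
  exact φ.map_cfc f A (continuousOn_spectrum f A)
    (LinearMap.continuous_of_finiteDimensional φ.toAlgHom.toLinearMap) hA hφA

/-- The ampliation `A ↦ A ⊗ 1`, as a unital star homomorphism so that it commutes with the
functional calculus. -/
def kroneckerOneStarAlgHom (m n : Type*) [Fintype m] [DecidableEq m] [Fintype n] [DecidableEq n] :
    Matrix m m ℂ →⋆ₐ[ℂ] Matrix (m × n) (m × n) ℂ where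
  toFun A := A ⊗ₖ 1
  map_zero' := zero_kronecker _
  map_one' := one_kronecker_one
  map_add' A B := add_kronecker A B _
  map_mul' A B := by rw [← mul_kronecker_mul, Matrix.one_mul]
  commutes' r := by simp [Algebra.algebraMap_eq_smul_one, smul_kronecker]
  map_star' A := by simp [star_eq_conjTranspose, conjTranspose_kronecker]

theorem matFun_kronecker_one (f : ℝ → ℝ) (hA : A.IsHermitian) :
    matFun f (A ⊗ₖ (1 : Matrix n n ℂ)) = matFun f A ⊗ₖ 1 :=
  (map_matFun (kroneckerOneStarAlgHom m n) f hA).symm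

end matFun

section DoubleOperatorIntegral

variable {m n : Type*} [Fintype m] [DecidableEq m] [Fintype n] [DecidableEq n]
  {A : Matrix m m ℂ} {B : Matrix n n ℂ}

/-- The matrix of `Z` with respect to the eigenbasis of `B` on the source and that of `A` on the
target. -/
noncomputable def toEigenbases (hA : A.IsHermitian) (hB : B.IsHermitian) (Z : Matrix m n ℂ) :
    Matrix m n ℂ :=
  star (hA.eigenvectorUnitary : Matrix m m ℂ) * Z * (hB.eigenvectorUnitary : Matrix n n ℂ)

/-- The double operator integral `∫∫ k(x, y) dE_A(x) Z dE_B(y)`: in the eigenbases of `A` and `B`,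
the entries of `Z` are multiplied by the values of `k` at the pairs of eigenvalues. -/
noncomputable def doubleOpIntegral (hA : A.IsHermitian) (hB : B.IsHermitian) (k : ℝ → ℝ → ℝ)
    (Z : Matrix m n ℂ) : Matrix m n ℂ :=
  (hA.eigenvectorUnitary : Matrix m m ℂ) *
    (of (fun i j => (k (hA.eigenvalues i) (hB.eigenvalues j) : ℂ)) ⊙ toEigenbases hA hB Z) *
    star (hB.eigenvectorUnitary : Matrix n n ℂ)

theorem doubleOpIntegral_congr (hA : A.PosDef) (hB : B.PosDef) {k l : ℝ → ℝ → ℝ}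
    (h : ∀ x y, 0 < x → 0 < y → k x y = l x y) (Z : Matrix m n ℂ) :
    doubleOpIntegral hA.1 hB.1 k Z = doubleOpIntegral hA.1 hB.1 l Z := by
  simp only [doubleOpIntegral, h _ _ (hA.eigenvalues_pos _) (hB.eigenvalues_pos _)]

theorem doubleOpIntegral_one (hA : A.IsHermitian) (hB : B.IsHermitian) (Z : Matrix m n ℂ) :
    doubleOpIntegral hA hB (fun _ _ => 1) Z = Z := by
  have hU := Unitary.mul_star_self_of_mem hA.eigenvectorUnitary.2
  have hV := Unitary.mul_star_self_of_mem hB.eigenvectorUnitary.2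
  have hone : of (fun _ _ => ((1 : ℝ) : ℂ)) ⊙ toEigenbases hA hB Z = toEigenbases hA hB Z := by
    ext i j
    simp
  rw [doubleOpIntegral, hone, toEigenbases]
  set U := (hA.eigenvectorUnitary : Matrix m m ℂ)
  set V := (hB.eigenvectorUnitary : Matrix n n ℂ)
  calc U * (star U * Z * V) * star V = (U * star U) * Z * (V * star V) := by
        simp only [Matrix.mul_assoc]
    _ = Z := by rw [hU, hV, Matrix.one_mul, Matrix.mul_one]

theorem doubleOpIntegral_mul_add_mul (hA : A.IsHermitian) (hB : B.IsHermitian) (a b : ℝ)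
    (k l : ℝ → ℝ → ℝ) (Z : Matrix m n ℂ) :
    doubleOpIntegral hA hB (fun x y => a * k x y + b * l x y) Z =
      a • doubleOpIntegral hA hB k Z + b • doubleOpIntegral hA hB l Z := by
  have hof : of (fun i j => ((a * k (hA.eigenvalues i) (hB.eigenvalues j) +
        b * l (hA.eigenvalues i) (hB.eigenvalues j) : ℝ) : ℂ)) =
      a • of (fun i j => (k (hA.eigenvalues i) (hB.eigenvalues j) : ℂ)) +
        b • of (fun i j => (l (hA.eigenvalues i) (hB.eigenvalues j) : ℂ)) := by
    ext i j
    simp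
  simp only [doubleOpIntegral, hof, add_hadamard, smul_hadamard, Matrix.mul_add, Matrix.add_mul,
    Matrix.mul_smul, Matrix.smul_mul]

theorem matFun_mul_doubleOpIntegral_mul_matFun (hA : A.IsHermitian) (hB : B.IsHermitian)
    (f g : ℝ → ℝ) (k : ℝ → ℝ → ℝ) (Z : Matrix m n ℂ) :
    matFun f A * doubleOpIntegral hA hB k Z * matFun g B =
      doubleOpIntegral hA hB (fun x y => f x * k x y * g y) Z := by
  have hU := Unitary.coe_star_mul_self hA.eigenvectorUnitary
  have hV := Unitary.coe_star_mul_self hB.eigenvectorUnitary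
  rw [matFun, dif_pos hA, matFun, dif_pos hB, doubleOpIntegral, doubleOpIntegral]
  set U := (hA.eigenvectorUnitary : Matrix m m ℂ)
  set V := (hB.eigenvectorUnitary : Matrix n n ℂ)
  set K := of (fun i j => (k (hA.eigenvalues i) (hB.eigenvalues j) : ℂ)) ⊙ toEigenbases hA hB Z
    with hK
  set F := diagonal fun i => (f (hA.eigenvalues i) : ℂ)
  set G := diagonal fun j => (g (hB.eigenvalues j) : ℂ)
  calc U * F * star U * (U * K * star V) * (V * G * star V)
      = U * (F * ((star U * U) * K * (star V * V)) * G) * star V := by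
        simp only [Matrix.mul_assoc]
    _ = U * (F * K * G) * star V := by rw [hU, hV, Matrix.one_mul, Matrix.mul_one]
    _ = _ := by
        congr 2
        ext i j
        rw [mul_diagonal, diagonal_mul, hK, hadamard_apply, hadamard_apply, of_apply, of_apply]
        push_cast
        ring

theorem trace_conjTranspose_doubleOpIntegral_mul (hA : A.IsHermitian) (hB : B.IsHermitian)
    (k l : ℝ → ℝ → ℝ) (Z : Matrix m n ℂ) :
    trace ((doubleOpIntegral hA hB k Z)ᴴ * doubleOpIntegral hA hB l Z) =
      ∑ i, ∑ j, ‖toEigenbases hA hB Z i j‖ ^ 2 *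
        (k (hA.eigenvalues i) (hB.eigenvalues j) * l (hA.eigenvalues i) (hB.eigenvalues j)) := by
  have hU := Unitary.coe_star_mul_self hA.eigenvectorUnitary
  have hV := Unitary.coe_star_mul_self hB.eigenvectorUnitary
  rw [doubleOpIntegral, doubleOpIntegral]
  set U := (hA.eigenvectorUnitary : Matrix m m ℂ)
  set V := (hB.eigenvectorUnitary : Matrix n n ℂ)
  set K := of (fun i j => (k (hA.eigenvalues i) (hB.eigenvalues j) : ℂ)) ⊙ toEigenbases hA hB Z
    with hK
  set L := of (fun i j => (l (hA.eigenvalues i) (hB.eigenvalues j) : ℂ)) ⊙ toEigenbases hA hB Z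
    with hL
  calc trace ((U * K * star V)ᴴ * (U * L * star V))
      = trace (V * (Kᴴ * (star U * U) * L) * star V) := by
        simp only [conjTranspose_mul, star_eq_conjTranspose, conjTranspose_conjTranspose,
          Matrix.mul_assoc]
    _ = trace (Kᴴ * L) := by rw [trace_mul_cycle, hU, hV, Matrix.one_mul, Matrix.mul_one]
    _ = ∑ i : m, ∑ j : n, star (K i j) * L i j := by
        simp only [trace, diag_apply, mul_apply, conjTranspose_apply]
        exact Finset.sum_comm
    _ = _ := by
        push_cast
        refine Finset.sum_congr rfl fun i _ => Finset.sum_congr rfl fun j _ => ?_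
        rw [hK, hL, hadamard_apply, hadamard_apply, of_apply, of_apply, star_mul',
          ← Complex.conj_mul', Complex.star_def, Complex.conj_ofReal]
        ring

end DoubleOperatorIntegral

section JointSpectralSum

variable {m : Type*} [Fintype m] [DecidableEq m] {A B : Matrix m m ℂ}

/-- The integral of `k` against the (unnormalized) Nussbaum–Szkoła measure of `(A, B)`, which gives
the pair of eigenvalues `(aᵢ, bⱼ)` the squared modulus of the inner product of the corresponding
eigenvectors as mass. -/
noncomputable def jointSpectralSum (hA : A.IsHermitian) (hB : B.IsHermitian) (k : ℝ → ℝ → ℝ) : ℝ :=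
  ∑ p : m × m,
    ‖toEigenbases hA hB 1 p.1 p.2‖ ^ 2 * k (hA.eigenvalues p.1) (hB.eigenvalues p.2)

theorem trace_conjTranspose_doubleOpIntegral_one_mul (hA : A.IsHermitian) (hB : B.IsHermitian)
    (k l : ℝ → ℝ → ℝ) :
    (trace ((doubleOpIntegral hA hB k 1)ᴴ * doubleOpIntegral hA hB l 1)).re =
      jointSpectralSum hA hB (fun x y => k x y * l x y) := by
  rw [trace_conjTranspose_doubleOpIntegral_mul, Complex.ofReal_re, jointSpectralSum,
    Fintype.sum_prod_type]

theorem matFun_mul_matFun_eq_doubleOpIntegral (hA : A.IsHermitian) (hB : B.IsHermitian)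
    (f g : ℝ → ℝ) :
    matFun f A * matFun g B = doubleOpIntegral hA hB (fun x y => f x * g y) 1 := by
  simpa [doubleOpIntegral_one] using
    matFun_mul_doubleOpIntegral_mul_matFun hA hB f g (fun _ _ => 1) 1

theorem re_trace_matFun_mul_matFun (hA : A.IsHermitian) (hB : B.IsHermitian) (f g : ℝ → ℝ) :
    (trace (matFun f A * matFun g B)).re = jointSpectralSum hA hB (fun x y => f x * g y) := by
  have h := trace_conjTranspose_doubleOpIntegral_one_mul hA hB (fun _ _ => 1) (fun x y => f x * g y)
  simpa [doubleOpIntegral_one, matFun_mul_matFun_eq_doubleOpIntegral hA hB] using h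

theorem jointSpectralSum_congr (hA : A.PosDef) (hB : B.PosDef) {k l : ℝ → ℝ → ℝ}
    (h : ∀ x y, 0 < x → 0 < y → k x y = l x y) :
    jointSpectralSum hA.1 hB.1 k = jointSpectralSum hA.1 hB.1 l :=
  Finset.sum_congr rfl fun p _ => by
    rw [h _ _ (hA.eigenvalues_pos p.1) (hB.eigenvalues_pos p.2)]

theorem jointSpectralSum_sub (hA : A.IsHermitian) (hB : B.IsHermitian) (k l : ℝ → ℝ → ℝ) :
    jointSpectralSum hA hB (fun x y => k x y - l x y) =
      jointSpectralSum hA hB k - jointSpectralSum hA hB l := by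
  simp only [jointSpectralSum, mul_sub, Finset.sum_sub_distrib]

theorem jointSpectralSum_const_mul (hA : A.IsHermitian) (hB : B.IsHermitian) (c : ℝ)
    (k : ℝ → ℝ → ℝ) :
    jointSpectralSum hA hB (fun x y => c * k x y) = c * jointSpectralSum hA hB k := by
  simp only [jointSpectralSum, Finset.mul_sum, mul_left_comm]

theorem intervalIntegrable_jointSpectralSum (hA : A.PosDef) (hB : B.PosDef)
    {k : ℝ → ℝ → ℝ → ℝ} {a b : ℝ}
    (hk : ∀ x y, 0 < x → 0 < y → IntervalIntegrable (fun s => k s x y) MeasureTheory.volume a b) :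
    IntervalIntegrable (fun s => jointSpectralSum hA.1 hB.1 (k s)) MeasureTheory.volume a b := by
  simp only [jointSpectralSum, ← Finset.sum_fn]
  exact IntervalIntegrable.sum _ fun p _ =>
    (hk _ _ (hA.eigenvalues_pos p.1) (hB.eigenvalues_pos p.2)).const_mul _

theorem integral_jointSpectralSum (hA : A.PosDef) (hB : B.PosDef)
    {k : ℝ → ℝ → ℝ → ℝ} {a b : ℝ}
    (hk : ∀ x y, 0 < x → 0 < y → IntervalIntegrable (fun s => k s x y) MeasureTheory.volume a b) :
    ∫ s in a..b, jointSpectralSum hA.1 hB.1 (k s) =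
      jointSpectralSum hA.1 hB.1 (fun x y => ∫ s in a..b, k s x y) := by
  simp only [jointSpectralSum]
  rw [intervalIntegral.integral_finsetSum fun p _ =>
    (hk _ _ (hA.eigenvalues_pos p.1) (hB.eigenvalues_pos p.2)).const_mul _]
  simp only [intervalIntegral.integral_const_mul]

end JointSpectralSum

section ScalarIntegral

variable {x y : ℝ}

theorem convexComb_pos {s x y : ℝ} (hs : s ∈ Set.Icc (0 : ℝ) 1) (hx : 0 < x) (hy : 0 < y) :
    0 < s * x + (1 - s) * y :=
  convex_Ioi (0 : ℝ) hx hy hs.1 (sub_nonneg.2 hs.2) (add_sub_cancel s 1)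

theorem intervalIntegrable_chiSq_kernel (hx : 0 < x) (hy : 0 < y) :
    IntervalIntegrable (fun s => (1 - s) * ((x - y) ^ 2 / (s * x + (1 - s) * y)))
      MeasureTheory.volume 0 1 := by
  refine ContinuousOn.intervalIntegrable ?_
  rw [Set.uIcc_of_le zero_le_one]
  exact ContinuousOn.mul (by fun_prop)
    (ContinuousOn.div (by fun_prop) (by fun_prop) fun s hs => (convexComb_pos hs hx hy).ne')

theorem integral_chiSq_kernel (hx : 0 < x) (hy : 0 < y) :
    ∫ s in (0 : ℝ)..1, (1 - s) * ((x - y) ^ 2 / (s * x + (1 - s) * y)) =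
      x * Real.log x - x * Real.log y - (x - y) := by
  have hderiv : ∀ s ∈ Set.uIcc (0 : ℝ) 1,
      HasDerivAt (fun s => x * Real.log (s * x + (1 - s) * y) - (x - y) * s)
        ((1 - s) * ((x - y) ^ 2 / (s * x + (1 - s) * y))) s := by
    intro s hs
    rw [Set.uIcc_of_le zero_le_one] at hs
    have hpos := (convexComb_pos hs hx hy).ne'
    have hcomb : HasDerivAt (fun s : ℝ => s * x + (1 - s) * y) (1 * x + -1 * y) s :=
      ((hasDerivAt_id s).mul_const x).add (((hasDerivAt_id s).const_sub 1).mul_const y)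
    refine (((hcomb.log hpos).const_mul x).sub
      ((hasDerivAt_id s).const_mul (x - y))).congr_deriv ?_
    generalize hc : s * x + (1 - s) * y = c at hpos
    field_simp
    rw [← hc]
    ring
  rw [intervalIntegral.integral_eq_sub_of_hasDerivAt hderiv
    (intervalIntegrable_chiSq_kernel hx hy)]
  simp only [one_mul, sub_self, zero_mul, add_zero, mul_one, zero_add, sub_zero, mul_zero]
  ring

end ScalarIntegral

section ChiSqDiv

variable {m n : Type*}

/-- The matrix of the Sylvester operator `X ↦ s A X + (1 - s) X B` in the coordinates `vec`. -/
noncomputable def sylvesterMatrix [DecidableEq m] [DecidableEq n] (s : ℝ) (A : Matrix m m ℂ)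
    (B : Matrix n n ℂ) : Matrix (n × m) (n × m) ℂ :=
  s • (1 ⊗ₖ A) + (1 - s) • (Bᵀ ⊗ₖ 1)

theorem isLinearMap_sylvesterMatrix [DecidableEq m] [DecidableEq n] (s : ℝ) :
    IsLinearMap ℝ fun q : Matrix m m ℂ × Matrix n n ℂ => sylvesterMatrix s q.1 q.2 := by
  constructor
  · intro p q
    simp only [sylvesterMatrix, Prod.fst_add, Prod.snd_add, transpose_add, kronecker_add,
      add_kronecker]
    module
  · intro c q
    simp only [sylvesterMatrix, Prod.smul_fst, Prod.smul_snd, transpose_smul, kronecker_smul,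
      smul_kronecker]
    module

theorem posDef_sylvesterMatrix [Finite m] [DecidableEq m] [Finite n] [DecidableEq n]
    {s : ℝ} (hs : s ∈ Set.Icc (0 : ℝ) 1) {A : Matrix m m ℂ} {B : Matrix n n ℂ}
    (hA : A.PosDef) (hB : B.PosDef) : (sylvesterMatrix s A B).PosDef :=
  convex_setOf_posDef (PosDef.one.kronecker hA) (hB.transpose.kronecker PosDef.one) hs.1
    (sub_nonneg.2 hs.2) (add_sub_cancel s 1)

variable [Fintype m] [DecidableEq m] [Fintype n] [DecidableEq n]

theorem sylvesterMatrix_mulVec_vec (s : ℝ) (A : Matrix m m ℂ) (B : Matrix n n ℂ)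
    (X : Matrix m n ℂ) :
    sylvesterMatrix s A B *ᵥ vec X = vec (s • (A * X) + (1 - s) • (X * B)) := by
  simp [sylvesterMatrix, add_mulVec, smul_mulVec, kronecker_mulVec_vec, vec_add, vec_smul]

/-- The `χ²`-divergence `⟨A - B, (s L_A + (1 - s) R_B)⁻¹ (A - B)⟩` of `A` and `B` in the
Hilbert–Schmidt inner product, where `L_A` and `R_B` are left multiplication by `A` and right
multiplication by `B`. -/
noncomputable def chiSqDiv (s : ℝ) (A B : Matrix m m ℂ) : ℝ :=
  (star (vec (A - B)) ⬝ᵥ (sylvesterMatrix s A B)⁻¹ *ᵥ vec (A - B)).re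

theorem convexOn_chiSqDiv {s : ℝ} (hs : s ∈ Set.Icc (0 : ℝ) 1) :
    ConvexOn ℝ ({A : Matrix m m ℂ | A.PosDef} ×ˢ {B : Matrix m m ℂ | B.PosDef})
      (fun q => chiSqDiv s q.1 q.2) := by
  have hlin : IsLinearMap ℝ fun q : Matrix m m ℂ × Matrix m m ℂ =>
      (sylvesterMatrix s q.1 q.2, vec (q.1 - q.2)) := by
    constructor
    · intro p q
      refine Prod.ext ?_ ?_
      · exact (isLinearMap_sylvesterMatrix s).map_add p q
      · rw [Prod.fst_add, Prod.snd_add, add_sub_add_comm, vec_add, Prod.snd_add]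
    · intro c q
      refine Prod.ext ?_ ?_
      · exact (isLinearMap_sylvesterMatrix s).map_smul c q
      · rw [Prod.smul_fst, Prod.smul_snd, ← smul_sub, vec_smul, Prod.smul_snd]
  exact ((convexOn_re_star_dotProduct_inv_mulVec (𝕜 := ℂ)).comp_linearMap (hlin.mk' _)).subset
    (fun _ hq => posDef_sylvesterMatrix hs hq.1 hq.2)
    (convex_setOf_posDef.prod convex_setOf_posDef)

theorem sylvesterMatrix_mulVec_vec_doubleOpIntegral (s : ℝ) {A : Matrix m m ℂ} {B : Matrix n n ℂ}
    (hA : A.IsHermitian) (hB : B.IsHermitian) (k : ℝ → ℝ → ℝ) (Z : Matrix m n ℂ) :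
    sylvesterMatrix s A B *ᵥ vec (doubleOpIntegral hA hB k Z) =
      vec (doubleOpIntegral hA hB (fun x y => (s * x + (1 - s) * y) * k x y) Z) := by
  have hleft := matFun_mul_doubleOpIntegral_mul_matFun hA hB (fun x => x) (fun _ => 1) k Z
  have hright := matFun_mul_doubleOpIntegral_mul_matFun hA hB (fun _ => 1) (fun y => y) k Z
  rw [matFun_id hA, matFun_const_one hB, Matrix.mul_one] at hleft
  rw [matFun_const_one hA, matFun_id hB, Matrix.one_mul] at hright
  rw [sylvesterMatrix_mulVec_vec, hleft, hright, ← doubleOpIntegral_mul_add_mul]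
  congr! 4
  ring

variable {A B : Matrix m m ℂ}

theorem sub_eq_doubleOpIntegral_one (hA : A.IsHermitian) (hB : B.IsHermitian) :
    A - B = doubleOpIntegral hA hB (fun x y => x - y) 1 := by
  have hfst := matFun_mul_matFun_eq_doubleOpIntegral hA hB (fun x => x) (fun _ => 1)
  have hsnd := matFun_mul_matFun_eq_doubleOpIntegral hA hB (fun _ => 1) (fun y => y)
  rw [matFun_id hA, matFun_const_one hB, Matrix.mul_one] at hfst
  rw [matFun_const_one hA, matFun_id hB, Matrix.one_mul] at hsnd
  have h := doubleOpIntegral_mul_add_mul hA hB 1 (-1) (fun x _ => x * 1) (fun _ y => 1 * y) 1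
  rw [← hfst, ← hsnd] at h
  simpa [← sub_eq_add_neg] using h.symm

theorem chiSqDiv_eq_jointSpectralSum {s : ℝ} (hs : s ∈ Set.Icc (0 : ℝ) 1) (hA : A.PosDef)
    (hB : B.PosDef) :
    chiSqDiv s A B =
      jointSpectralSum hA.1 hB.1 (fun x y => (x - y) ^ 2 / (s * x + (1 - s) * y)) := by
  set X := doubleOpIntegral hA.1 hB.1 (fun x y => (x - y) / (s * x + (1 - s) * y)) 1 with hX
  have hsolve : sylvesterMatrix s A B *ᵥ vec X = vec (A - B) := by
    rw [hX, sylvesterMatrix_mulVec_vec_doubleOpIntegral, sub_eq_doubleOpIntegral_one hA.1 hB.1]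
    congr 1
    exact doubleOpIntegral_congr hA hB
      (fun x y hx hy => mul_div_cancel₀ _ (convexComb_pos hs hx hy).ne') 1
  have hinv : (sylvesterMatrix s A B)⁻¹ *ᵥ vec (A - B) = vec X := by
    have := (posDef_sylvesterMatrix hs hA hB).isUnit.invertible
    exact inv_mulVec_eq_vec hsolve.symm
  rw [chiSqDiv, hinv, star_vec_dotProduct_vec, sub_eq_doubleOpIntegral_one hA.1 hB.1,
    trace_conjTranspose_doubleOpIntegral_one_mul]
  congr! 3
  ring

theorem one_sub_mul_chiSqDiv {s : ℝ} (hs : s ∈ Set.Icc (0 : ℝ) 1) (hA : A.PosDef)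
    (hB : B.PosDef) :
    (1 - s) * chiSqDiv s A B =
      jointSpectralSum hA.1 hB.1 (fun x y => (1 - s) * ((x - y) ^ 2 / (s * x + (1 - s) * y))) := by
  rw [chiSqDiv_eq_jointSpectralSum hs hA hB, jointSpectralSum_const_mul]

theorem intervalIntegrable_one_sub_mul_chiSqDiv (hA : A.PosDef) (hB : B.PosDef) :
    IntervalIntegrable (fun s => (1 - s) * chiSqDiv s A B) MeasureTheory.volume 0 1 := by
  refine (intervalIntegrable_jointSpectralSum hA hB fun x y hx hy =>
    intervalIntegrable_chiSq_kernel hx hy).congr fun s hs => ?_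
  rw [Set.uIoc_of_le zero_le_one] at hs
  exact (one_sub_mul_chiSqDiv (Set.Ioc_subset_Icc_self hs) hA hB).symm

theorem integral_one_sub_mul_chiSqDiv (hA : A.PosDef) (hB : B.PosDef) :
    ∫ s in (0 : ℝ)..1, (1 - s) * chiSqDiv s A B =
      jointSpectralSum hA.1 hB.1 (fun x y => x * Real.log x - x * Real.log y - (x - y)) := by
  calc ∫ s in (0 : ℝ)..1, (1 - s) * chiSqDiv s A B
      = ∫ s in (0 : ℝ)..1, jointSpectralSum hA.1 hB.1
          (fun x y => (1 - s) * ((x - y) ^ 2 / (s * x + (1 - s) * y))) := by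
        refine intervalIntegral.integral_congr fun s hs => ?_
        rw [Set.uIcc_of_le zero_le_one] at hs
        exact one_sub_mul_chiSqDiv hs hA hB
    _ = jointSpectralSum hA.1 hB.1 (fun x y =>
          ∫ s in (0 : ℝ)..1, (1 - s) * ((x - y) ^ 2 / (s * x + (1 - s) * y))) :=
        integral_jointSpectralSum hA hB fun x y hx hy => intervalIntegrable_chiSq_kernel hx hy
    _ = jointSpectralSum hA.1 hB.1 (fun x y => x * Real.log x - x * Real.log y - (x - y)) :=
        jointSpectralSum_congr hA hB fun x y hx hy => integral_chiSq_kernel hx hy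

end ChiSqDiv

section RelEntropy

variable {m : Type*} [Fintype m] [DecidableEq m] {A B : Matrix m m ℂ}

/-- Umegaki's relative entropy `D(A ‖ B) = Tr A (log A - log B)`. -/
noncomputable def relEntropy (A B : Matrix m m ℂ) : ℝ :=
  (trace (A * (matFun Real.log A - matFun Real.log B))).re

theorem re_trace_left_eq_jointSpectralSum (hA : A.IsHermitian) (hB : B.IsHermitian) :
    A.trace.re = jointSpectralSum hA hB (fun x _ => x) := by
  simpa [matFun_id hA, matFun_const_one hB] using
    re_trace_matFun_mul_matFun hA hB (fun x => x) (fun _ => 1)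

theorem re_trace_right_eq_jointSpectralSum (hA : A.IsHermitian) (hB : B.IsHermitian) :
    B.trace.re = jointSpectralSum hA hB (fun _ y => y) := by
  simpa [matFun_const_one hA, matFun_id hB] using
    re_trace_matFun_mul_matFun hA hB (fun _ => 1) (fun y => y)

theorem relEntropy_eq_jointSpectralSum (hA : A.IsHermitian) (hB : B.IsHermitian) :
    relEntropy A B =
      jointSpectralSum hA hB (fun x y => x * Real.log x - x * Real.log y) := by
  have hAA := re_trace_matFun_mul_matFun hA hB (fun x => x * Real.log x) (fun _ => 1)
  have hAB := re_trace_matFun_mul_matFun hA hB (fun x => x) Real.log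
  rw [← matFun_mul_matFun _ _ hA, matFun_id hA, matFun_const_one hB, Matrix.mul_one] at hAA
  rw [matFun_id hA] at hAB
  rw [relEntropy, Matrix.mul_sub, trace_sub, Complex.sub_re, hAA, hAB, ← jointSpectralSum_sub]
  simp only [mul_one]

theorem relEntropy_eq_integral (hA : A.PosDef) (hB : B.PosDef) :
    relEntropy A B =
      (∫ s in (0 : ℝ)..1, (1 - s) * chiSqDiv s A B) + (A.trace.re - B.trace.re) := by
  rw [← sub_eq_iff_eq_add, relEntropy_eq_jointSpectralSum hA.1 hB.1,
    re_trace_left_eq_jointSpectralSum hA.1 hB.1, re_trace_right_eq_jointSpectralSum hA.1 hB.1,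
    ← jointSpectralSum_sub, ← jointSpectralSum_sub, integral_one_sub_mul_chiSqDiv hA hB]

theorem convexOn_relEntropy :
    ConvexOn ℝ ({A : Matrix m m ℂ | A.PosDef} ×ˢ {B : Matrix m m ℂ | B.PosDef})
      (fun q => relEntropy q.1 q.2) := by
  have hconvex : Convex ℝ ({A : Matrix m m ℂ | A.PosDef} ×ˢ {B : Matrix m m ℂ | B.PosDef}) :=
    convex_setOf_posDef.prod convex_setOf_posDef
  have hintegral : ConvexOn ℝ ({A : Matrix m m ℂ | A.PosDef} ×ˢ {B : Matrix m m ℂ | B.PosDef})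
      (fun q => ∫ s in (0 : ℝ)..1, (1 - s) * chiSqDiv s q.1 q.2) := by
    simp only [intervalIntegral.integral_of_le zero_le_one]
    refine MeasureTheory.integral_convexOn_of_integrand_ae hconvex ?_ fun q hq => ?_
    · filter_upwards [MeasureTheory.ae_restrict_mem measurableSet_Ioc] with s hs
      exact (convexOn_chiSqDiv (Set.Ioc_subset_Icc_self hs)).smul (sub_nonneg.2 hs.2)
    · exact (intervalIntegrable_iff_integrableOn_Ioc_of_le zero_le_one).1
        (intervalIntegrable_one_sub_mul_chiSqDiv hq.1 hq.2)
  have htrace : IsLinearMap ℝ fun q : Matrix m m ℂ × Matrix m m ℂ =>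
      q.1.trace.re - q.2.trace.re := by
    constructor
    · intro p q
      simp only [Prod.fst_add, Prod.snd_add, trace_add, Complex.add_re]
      ring
    · intro c q
      simp only [Prod.smul_fst, Prod.smul_snd, trace_smul, Complex.smul_re, smul_eq_mul, mul_sub]
  exact (hintegral.add (htrace.mk' _ |>.convexOn hconvex)).congr fun q hq =>
    (relEntropy_eq_integral hq.1 hq.2).symm

end RelEntropy

section PartialTrace

variable {ι₁ ι₂ : Type*} [Fintype ι₂]

theorem isHermitian_ptrace {ρ : Matrix (ι₁ × ι₂) (ι₁ × ι₂) ℂ} (hρ : ρ.IsHermitian) :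
    (ptrace ρ).IsHermitian := by
  ext i j
  simp [ptrace, hρ.apply]

theorem ptrace_eq_sum_submatrix (ρ : Matrix (ι₁ × ι₂) (ι₁ × ι₂) ℂ) :
    ptrace ρ = ∑ k : ι₂, ρ.submatrix (fun i => (i, k)) (fun i => (i, k)) := by
  ext i j
  simp [ptrace, Matrix.sum_apply]

theorem posDef_ptrace [Finite ι₁] [Nonempty ι₂] {ρ : Matrix (ι₁ × ι₂) (ι₁ × ι₂) ℂ}
    (hρ : ρ.PosDef) : (ptrace ρ).PosDef := by
  rw [ptrace_eq_sum_submatrix]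
  exact Finset.sum_induction_nonempty _ PosDef (fun _ _ => PosDef.add) Finset.univ_nonempty
    fun k _ => hρ.submatrix (Prod.mk_left_injective k)

theorem posDef_ptrace_kronecker_one [Finite ι₁] [DecidableEq ι₂]
    {ρ : Matrix (ι₁ × ι₂) (ι₁ × ι₂) ℂ} (hρ : ρ.PosDef) :
    (ptrace ρ ⊗ₖ (1 : Matrix ι₂ ι₂ ℂ)).PosDef := by
  cases isEmpty_or_nonempty ι₂
  · rwa [Subsingleton.elim (ptrace ρ ⊗ₖ (1 : Matrix ι₂ ι₂ ℂ)) ρ]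
  · exact (posDef_ptrace hρ).kronecker PosDef.one

theorem isLinearMap_ptrace_kronecker_one [DecidableEq ι₂] :
    IsLinearMap ℝ fun ρ : Matrix (ι₁ × ι₂) (ι₁ × ι₂) ℂ => ptrace ρ ⊗ₖ (1 : Matrix ι₂ ι₂ ℂ) := by
  constructor <;> intros <;> ext <;>
    simp [ptrace, Finset.sum_add_distrib, ← Finset.mul_sum, add_mul, mul_assoc]

theorem trace_mul_kronecker_one [Fintype ι₁] [DecidableEq ι₂]
    (ρ : Matrix (ι₁ × ι₂) (ι₁ × ι₂) ℂ) (X : Matrix ι₁ ι₁ ℂ) :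
    trace (ρ * (X ⊗ₖ (1 : Matrix ι₂ ι₂ ℂ))) = trace (ptrace ρ * X) := by
  simp only [trace, diag_apply, mul_apply, Fintype.sum_prod_type, kroneckerMap_apply, one_apply,
    ptrace, of_apply, mul_ite, mul_one, mul_zero, Finset.sum_ite_eq', Finset.mem_univ, if_true,
    Finset.sum_mul]
  exact Finset.sum_congr rfl fun i _ => Finset.sum_comm

theorem vnEntropy_sub_vnEntropy_ptrace [Fintype ι₁] [DecidableEq ι₁] [DecidableEq ι₂]
    {ρ : Matrix (ι₁ × ι₂) (ι₁ × ι₂) ℂ} (hρ : ρ.IsHermitian) :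
    vnEntropy ρ - vnEntropy (ptrace ρ) = -relEntropy ρ (ptrace ρ ⊗ₖ (1 : Matrix ι₂ ι₂ ℂ)) := by
  rw [relEntropy, matFun_kronecker_one _ (isHermitian_ptrace hρ), Matrix.mul_sub, trace_sub,
    trace_mul_kronecker_one, Complex.sub_re, vnEntropy, vnEntropy]
  ring

end PartialTrace

/-- The map `ρ ↦ S(ρ) − S(ρ₁)` is concave on positive definite
operators on `H = H₁ ⊗ H₂`, where `ρ₁ = Tr₂ ρ`. -/
theorem vnEntropy_sub_partialTrace_concave
    {ι₁ ι₂ : Type*} [Fintype ι₁] [DecidableEq ι₁] [Fintype ι₂] [DecidableEq ι₂] :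
    ConcaveOn ℝ {ρ : Matrix (ι₁ × ι₂) (ι₁ × ι₂) ℂ | ρ.PosDef}
      (fun ρ => vnEntropy ρ - vnEntropy (ptrace ρ)) := by
  have hlin : IsLinearMap ℝ fun ρ : Matrix (ι₁ × ι₂) (ι₁ × ι₂) ℂ =>
      (ρ, ptrace ρ ⊗ₖ (1 : Matrix ι₂ ι₂ ℂ)) :=
    (LinearMap.id.prod isLinearMap_ptrace_kronecker_one.mk').isLinear
  have hconvex : ConvexOn ℝ {ρ : Matrix (ι₁ × ι₂) (ι₁ × ι₂) ℂ | ρ.PosDef}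
      (fun ρ => relEntropy ρ (ptrace ρ ⊗ₖ (1 : Matrix ι₂ ι₂ ℂ))) :=
    (convexOn_relEntropy.comp_linearMap (hlin.mk' _)).subset
      (fun _ hρ => ⟨hρ, posDef_ptrace_kronecker_one hρ⟩) convex_setOf_posDef
  exact hconvex.neg.congr fun ρ hρ => (vnEntropy_sub_vnEntropy_ptrace hρ.1).symm
end
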